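/- arXiv:2111.10301 — 2 statements merged into one kernel-verified Lean document; each statement's English description precedes it below -/
import Mathlib

section
/- Let x : [0,1] → ℝ be a nonconstant continuous function whose Faber–Schauder coefficients satisfy the reverse Jensen condition, and set ξ⁺ := limsup_{n→∞} ξ_n and ξ⁻ := liminf_{n→∞} ξ_n, assumed to satisfy ξ⁺ < 1 and ξ⁻ < 1. Then limsup_{n→∞} V_n^{(p)}(x) = 0 for every p > 1/(1 − ξ⁺) and limsup_{n→∞} V_n^{(p)}(x) = ∞ for every p < 1/(1 − ξ⁺); moreover liminf_{n→∞} V_n^{(p)}(x) = 0 for every p > 1/(1 − ξ⁻) and liminf_{n→∞} V_n^{(p)}(x) = ∞ for every p < 1/(1 − ξ⁻). -/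
/-!
The slopes `M_n` of the chords of `x` over the dyadic intervals of generation `n` form a martingale
for the dyadic filtration, and `V_n^{(p)} = 2 ^ (n (1 - p)) E|M_n|^p`, while orthogonality of the
increments gives `E M_n² = M_0² + s_n²` exactly. The reverse Jensen quantity of order `p` is the
`p`-th moment of the square function of `M`, so its upper bound and Burkholder's inequality give
`E|M_n|^p ≤ 2 ^ o(n) (E M_n²)^{p/2}` for arbitrarily large, hence for all, `p > 0`. Lyapunov's
interpolation inequality between the exponents `p`, `2` and `4 / p` turns these upper bounds and the
exact second moment into the matching lower bounds. As `(E M_n²)^{1/2}` is comparable to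
`2 ^ (n ξ_n)`, the variation `V_n^{(p)}` is `2 ^ (p (ξ_n - (1 - 1/p)) n)` up to factors `2 ^ o(n)`,
and everything depends on whether `ξ_n` lies above or below `1 - 1/p`.

Burkholder's inequality is only needed for even exponents `2r + 2`. There
`M^{2r+2} - C (M² + [M])^r [M]` is a supermartingale for a suitable `C`, by binomial expansion of
`(a ± d)^{2r+2}` and convexity of `t ↦ t^r`.
-/

open Filter Finset

noncomputable section

/-- The `n`-th dyadic `p`-th variation of `x`. -/
def dyadicVar (x : ℝ → ℝ) (p : ℝ) (n : ℕ) : ℝ :=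
  ∑ k ∈ Finset.range (2 ^ n), |x (((k : ℝ) + 1) / 2 ^ n) - x ((k : ℝ) / 2 ^ n)| ^ p

/-- `x` is nonconstant on `[0,1]`. -/
def Nonconstant (x : ℝ → ℝ) : Prop :=
  ∃ s ∈ Set.Icc (0 : ℝ) 1, ∃ t ∈ Set.Icc (0 : ℝ) 1, x s ≠ x t

/-- `x` admits the Hurst roughness exponent `H ∈ (0,1]`. -/
def HasHurstExponent (x : ℝ → ℝ) (H : ℝ) : Prop :=
  0 < H ∧ H ≤ 1 ∧
  (∀ p : ℝ, 1 / H < p → Tendsto (dyadicVar x p) atTop (nhds 0)) ∧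
  (∀ p : ℝ, 0 < p → p < 1 / H → Tendsto (dyadicVar x p) atTop atTop)

/-- Faber–Schauder coefficient `θ_{m,k}` of `x`. -/
def fsCoeff (x : ℝ → ℝ) (m k : ℕ) : ℝ :=
  2 ^ ((m : ℝ) / 2) *
    (2 * x ((2 * (k : ℝ) + 1) / 2 ^ (m + 1)) - x ((k : ℝ) / 2 ^ m) - x (((k : ℝ) + 1) / 2 ^ m))

/-- `s_n = (∑_{m<n} ∑_{k<2^m} θ_{m,k}²)^{1/2}`. -/
def sSeq (x : ℝ → ℝ) (n : ℕ) : ℝ :=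
  Real.sqrt (∑ m ∈ Finset.range n, ∑ k ∈ Finset.range (2 ^ m), fsCoeff x m k ^ 2)

/-- `ξ_n = (1/n) log₂ s_n`. -/
def xiSeq (x : ℝ → ℝ) (n : ℕ) : ℝ := Real.logb 2 (sSeq x n) / n

/-- A nondecreasing function `ϱ : ℕ → [1,∞)` is subexponential if `(1/n) log ϱ(n) → 0`. -/
def Subexponential (ϱ : ℕ → ℝ) : Prop :=
  Monotone ϱ ∧ (∀ n, 1 ≤ ϱ n) ∧ Tendsto (fun n : ℕ => Real.log (ϱ n) / n) atTop (nhds 0)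

/-- The quantity `2^{-(n-1)} ∑_{k<2^{n-1}} (∑_{m<n} 2^m θ²_{m,⌊2^{m-n+1}k⌋})^{p/2}`;
note that `⌊2^{m-n+1}k⌋ = k / 2^{n-1-m}` (natural number division). -/
def RJquantity (x : ℝ → ℝ) (p : ℝ) (n : ℕ) : ℝ :=
  (∑ k ∈ Finset.range (2 ^ (n - 1)),
      (∑ m ∈ Finset.range n, 2 ^ m * fsCoeff x m (k / 2 ^ (n - 1 - m)) ^ 2) ^ (p / 2)) /
    2 ^ (n - 1)

/-- The reverse Jensen condition on the Faber–Schauder coefficients of `x`. -/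
def ReverseJensen (x : ℝ → ℝ) : Prop :=
  ∀ p : ℝ, 1 ≤ p → ∃ np : ℕ, ∃ ϱ : ℕ → ℝ, Subexponential ϱ ∧
    ∀ n : ℕ, np ≤ n →
      (ϱ n)⁻¹ * sSeq x n ^ p ≤ RJquantity x p n ∧ RJquantity x p n ≤ ϱ n * sSeq x n ^ p

open Asymptotics BigOperators

/-! ### Comparison up to subexponential factors -/

/-- `f ≤ 2 ^ o(n) * g`: the sequence `f` is at most `g` up to a subexponential factor. -/
def SubexpLE (f g : ℕ → ℝ) : Prop :=
  ∀ δ : ℝ, 0 < δ → ∀ᶠ n : ℕ in atTop, f n ≤ (2 : ℝ) ^ (δ * n) * g n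

theorem tendsto_two_rpow_mul_atTop {δ : ℝ} (hδ : 0 < δ) :
    Tendsto (fun n : ℕ => (2 : ℝ) ^ (δ * n)) atTop atTop :=
  (tendsto_rpow_atTop_of_base_gt_one 2 one_lt_two).comp
    (tendsto_natCast_atTop_atTop.const_mul_atTop hδ)

theorem two_rpow_half_mul_self (δ : ℝ) (n : ℕ) :
    (2 : ℝ) ^ (δ / 2 * n) * 2 ^ (δ / 2 * n) = 2 ^ (δ * n) := by
  rw [← Real.rpow_add two_pos, ← add_mul, add_halves]

namespace SubexpLE

variable {f g h : ℕ → ℝ}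

theorem of_le_const_mul {C : ℝ} (hfg : ∀ᶠ n in atTop, f n ≤ C * g n) (hg : ∀ n, 0 ≤ g n) :
    SubexpLE f g := by
  intro δ hδ
  filter_upwards [hfg, (tendsto_two_rpow_mul_atTop hδ).eventually_ge_atTop C] with n hn hCn
  exact hn.trans (mul_le_mul_of_nonneg_right hCn (hg n))

theorem of_le (hfg : ∀ᶠ n in atTop, f n ≤ g n) (hg : ∀ n, 0 ≤ g n) : SubexpLE f g :=
  of_le_const_mul (C := 1) (by simpa only [one_mul] using hfg) hg

theorem of_isBigO (hfg : f =O[atTop] g) (hg : ∀ n, 0 ≤ g n) : SubexpLE f g := by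
  obtain ⟨C, hC⟩ := hfg.bound
  refine of_le_const_mul (C := C) (hC.mono fun n hn => ?_) hg
  rw [Real.norm_of_nonneg (hg n)] at hn
  exact (Real.le_norm_self _).trans hn

theorem trans (hfg : SubexpLE f g) (hgh : SubexpLE g h) : SubexpLE f h := by
  intro δ hδ
  filter_upwards [hfg _ (half_pos hδ), hgh _ (half_pos hδ)] with n hfgn hghn
  calc f n ≤ 2 ^ (δ / 2 * n) * g n := hfgn
    _ ≤ 2 ^ (δ / 2 * n) * (2 ^ (δ / 2 * n) * h n) := by gcongr
    _ = 2 ^ (δ * n) * h n := by rw [← mul_assoc, two_rpow_half_mul_self]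

theorem add (hf : SubexpLE f h) (hg : SubexpLE g h) (hh : ∀ n, 0 ≤ h n) :
    SubexpLE (fun n => f n + g n) h := by
  have hsum : SubexpLE (fun n => f n + g n) (fun n => 2 * h n) := by
    intro δ hδ
    filter_upwards [hf δ hδ, hg δ hδ] with n hfn hgn
    linarith
  exact hsum.trans (of_le_const_mul (.of_forall fun n => le_rfl) hh)

theorem mul_left (hfg : SubexpLE f g) (hh : ∀ n, 0 ≤ h n) :
    SubexpLE (fun n => h n * f n) (fun n => h n * g n) := by
  intro δ hδ
  filter_upwards [hfg δ hδ] with n hn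
  rw [mul_left_comm]
  exact mul_le_mul_of_nonneg_left hn (hh n)

theorem rpow (hfg : SubexpLE f g) (hf : ∀ n, 0 ≤ f n) (hg : ∀ n, 0 ≤ g n) {p : ℝ} (hp : 0 < p) :
    SubexpLE (fun n => f n ^ p) (fun n => g n ^ p) := by
  intro δ hδ
  filter_upwards [hfg _ (div_pos hδ hp)] with n hn
  calc f n ^ p ≤ (2 ^ (δ / p * n) * g n) ^ p := Real.rpow_le_rpow (hf n) hn hp.le
    _ = 2 ^ (δ * n) * g n ^ p := by
      rw [Real.mul_rpow (by positivity) (hg n), ← Real.rpow_mul two_pos.le]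
      congr 2
      field_simp

end SubexpLE

theorem Subexponential.subexpLE_one {ϱ : ℕ → ℝ} (hϱ : Subexponential ϱ) :
    SubexpLE ϱ (fun _ => 1) := by
  intro δ hδ
  have hδlog : 0 < δ * Real.log 2 := mul_pos hδ (Real.log_pos one_lt_two)
  filter_upwards [hϱ.2.2.eventually_lt_const hδlog, eventually_gt_atTop 0] with n hn hn0
  have hϱn : 0 < ϱ n := zero_lt_one.trans_le (hϱ.2.1 n)
  rw [div_lt_iff₀ (by exact_mod_cast hn0)] at hn
  rw [mul_one, ← Real.log_le_log_iff hϱn (by positivity), Real.log_rpow two_pos]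
  linarith

/-! ### Extended limits of sequences with exponential growth -/

theorem limsup_coe_eq_top {v : ℕ → ℝ} (hv : ∀ A : ℝ, ∃ᶠ n in atTop, A ≤ v n) :
    limsup (fun n => (v n : EReal)) atTop = ⊤ := by
  refine (EReal.eq_top_iff_forall_lt _).2 fun A => ?_
  refine (EReal.coe_lt_coe (lt_add_one A)).trans_le (le_limsup_of_frequently_le' ?_)
  exact (hv (A + 1)).mono fun n hn => EReal.coe_le_coe hn

theorem liminf_coe_eq_zero {v : ℕ → ℝ} (hv0 : ∀ n, 0 ≤ v n)
    (hv : ∀ ε : ℝ, 0 < ε → ∃ᶠ n in atTop, v n < ε) :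
    liminf (fun n => (v n : EReal)) atTop = 0 := by
  refine le_antisymm (EReal.le_of_forall_lt_iff_le.1 fun ε hε => ?_) ?_
  · refine liminf_le_of_frequently_le' ((hv ε (by exact_mod_cast hε)).mono fun n hn => ?_)
    exact EReal.coe_le_coe hn.le
  · exact le_liminf_of_le (h := .of_forall fun n => EReal.coe_nonneg.2 (hv0 n))

section ExponentialGrowth

variable {v ξ : ℕ → ℝ} {p c : ℝ}

theorem eventually_lt_of_exponent_le (hp : 0 < p)
    (hup : SubexpLE v (fun n => 2 ^ (p * (ξ n - c) * n))) {b : ℝ} (hb : b < c) {ε : ℝ}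
    (hε : 0 < ε) : ∀ᶠ n in atTop, ξ n ≤ b → v n < ε := by
  have hδ : 0 < p * (c - b) / 2 := half_pos (mul_pos hp (sub_pos.2 hb))
  filter_upwards [hup _ hδ, (tendsto_two_rpow_mul_atTop hδ).eventually_gt_atTop ε⁻¹]
    with n hvn hεn hξ
  have hexp : p * (ξ n - c) ≤ -(p * (c - b)) := by
    rw [← mul_neg]
    gcongr
    linarith
  calc v n ≤ 2 ^ (p * (c - b) / 2 * n) * 2 ^ (p * (ξ n - c) * n) := hvn
    _ ≤ 2 ^ (p * (c - b) / 2 * n) * 2 ^ (-(p * (c - b)) * n) := by gcongr; exact one_le_two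
    _ = (2 ^ (p * (c - b) / 2 * n))⁻¹ := by
      rw [← Real.rpow_add two_pos, ← Real.rpow_neg two_pos.le]
      ring_nf
    _ < ε := inv_lt_of_inv_lt₀ hε hεn

theorem eventually_ge_of_le_exponent (hp : 0 < p)
    (hlow : SubexpLE (fun n => 2 ^ (p * (ξ n - c) * n)) v) {b : ℝ} (hb : c < b) (A : ℝ) :
    ∀ᶠ n in atTop, b ≤ ξ n → A ≤ v n := by
  have hδ : 0 < p * (b - c) / 2 := half_pos (mul_pos hp (sub_pos.2 hb))
  filter_upwards [hlow _ hδ, (tendsto_two_rpow_mul_atTop hδ).eventually_ge_atTop A] with n hvn hA hξ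
  have hexp : 2 ^ (p * (b - c) / 2 * n) * 2 ^ (p * (b - c) / 2 * n)
      ≤ 2 ^ (p * (b - c) / 2 * n) * v n :=
    calc (2 : ℝ) ^ (p * (b - c) / 2 * n) * 2 ^ (p * (b - c) / 2 * n)
        = 2 ^ (p * (b - c) * n) := two_rpow_half_mul_self _ n
      _ ≤ 2 ^ (p * (ξ n - c) * n) := by gcongr; exact one_le_two
      _ ≤ 2 ^ (p * (b - c) / 2 * n) * v n := hvn
  exact hA.trans (le_of_mul_le_mul_left hexp (by positivity))

theorem limsup_eq_zero_of_limsup_exponent_lt (hp : 0 < p) (hv0 : ∀ n, 0 ≤ v n)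
    (hup : SubexpLE v (fun n => 2 ^ (p * (ξ n - c) * n)))
    (hξ : IsBoundedUnder (· ≤ ·) atTop ξ) (hc : limsup ξ atTop < c) :
    limsup (fun n => (v n : EReal)) atTop = 0 := by
  obtain ⟨b, hξb, hbc⟩ := exists_between hc
  have hv : Tendsto v atTop (nhds 0) := by
    refine tendsto_order.2 ⟨fun a ha => .of_forall fun n => ha.trans_le (hv0 n), fun ε hε => ?_⟩
    filter_upwards [eventually_lt_of_limsup_lt hξb hξ, eventually_lt_of_exponent_le hp hup hbc hε]
      with n hn hvn using hvn hn.le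
  exact (EReal.tendsto_coe.2 hv).limsup_eq

theorem limsup_eq_top_of_lt_limsup_exponent (hp : 0 < p)
    (hlow : SubexpLE (fun n => 2 ^ (p * (ξ n - c) * n)) v)
    (hξ : IsCoboundedUnder (· ≤ ·) atTop ξ) (hc : c < limsup ξ atTop) :
    limsup (fun n => (v n : EReal)) atTop = ⊤ := by
  obtain ⟨b, hcb, hbξ⟩ := exists_between hc
  refine limsup_coe_eq_top fun A => ?_
  exact ((frequently_lt_of_lt_limsup hξ hbξ).and_eventually
    (eventually_ge_of_le_exponent hp hlow hcb A)).mono fun n hn => hn.2 hn.1.le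

theorem liminf_eq_zero_of_liminf_exponent_lt (hp : 0 < p) (hv0 : ∀ n, 0 ≤ v n)
    (hup : SubexpLE v (fun n => 2 ^ (p * (ξ n - c) * n)))
    (hξ : IsCoboundedUnder (· ≥ ·) atTop ξ) (hc : liminf ξ atTop < c) :
    liminf (fun n => (v n : EReal)) atTop = 0 := by
  obtain ⟨b, hξb, hbc⟩ := exists_between hc
  refine liminf_coe_eq_zero hv0 fun ε hε => ?_
  exact ((frequently_lt_of_liminf_lt hξ hξb).and_eventually
    (eventually_lt_of_exponent_le hp hup hbc hε)).mono fun n hn => hn.2 hn.1.le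

theorem liminf_eq_top_of_lt_liminf_exponent (hp : 0 < p)
    (hlow : SubexpLE (fun n => 2 ^ (p * (ξ n - c) * n)) v)
    (hξ : IsBoundedUnder (· ≥ ·) atTop ξ) (hc : c < liminf ξ atTop) :
    liminf (fun n => (v n : EReal)) atTop = ⊤ := by
  obtain ⟨b, hcb, hbξ⟩ := exists_between hc
  refine (EReal.tendsto_coe_nhds_top_iff.2 (tendsto_atTop.2 fun A => ?_)).liminf_eq
  filter_upwards [eventually_lt_of_lt_liminf hbξ hξ, eventually_ge_of_le_exponent hp hlow hcb A]
    with n hn hvn using hvn hn.le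

end ExponentialGrowth

/-! ### Interpolation of moments -/

theorem expect_rpow_mul_rpow_le {ι : Type*} (s : Finset ι) {f g : ι → ℝ} (hf : ∀ i, 0 ≤ f i)
    (hg : ∀ i, 0 ≤ g i) {θ : ℝ} (hθ0 : 0 < θ) (hθ1 : θ < 1) :
    𝔼 i ∈ s, f i ^ θ * g i ^ (1 - θ) ≤ (𝔼 i ∈ s, f i) ^ θ * (𝔼 i ∈ s, g i) ^ (1 - θ) := by
  have hθ' : 0 < 1 - θ := sub_pos.2 hθ1
  have hconj : (θ⁻¹).HolderConjugate (1 - θ)⁻¹ :=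
    Real.holderConjugate_iff.2 ⟨(one_lt_inv₀ hθ0).2 hθ1, by simp⟩
  have hholder := Real.inner_le_Lp_mul_Lq_of_nonneg s hconj
    (fun i _ => Real.rpow_nonneg (hf i) θ) (fun i _ => Real.rpow_nonneg (hg i) (1 - θ))
  simp only [← Real.rpow_mul (hf _), ← Real.rpow_mul (hg _), mul_inv_cancel₀ hθ0.ne',
    mul_inv_cancel₀ hθ'.ne', Real.rpow_one, one_div, inv_inv] at hholder
  have hcard : (#s : ℝ) ^ θ * (#s : ℝ) ^ (1 - θ) = #s := by
    rw [← Real.rpow_add_of_nonneg (Nat.cast_nonneg _) hθ0.le hθ'.le, add_sub_cancel, Real.rpow_one]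
  simp only [expect_eq_sum_div_card]
  rw [Real.div_rpow (sum_nonneg fun i _ => hf i) (Nat.cast_nonneg _),
    Real.div_rpow (sum_nonneg fun i _ => hg i) (Nat.cast_nonneg _), div_mul_div_comm, hcard]
  gcongr

theorem expect_rpow_interpolation {ι : Type*} (s : Finset ι) {y : ι → ℝ} (hy : ∀ i, 0 ≤ y i)
    {a b θ : ℝ} (ha : 0 ≤ a) (hb : 0 ≤ b) (hθ0 : 0 < θ) (hθ1 : θ < 1) :
    𝔼 i ∈ s, y i ^ (θ * a + (1 - θ) * b)
      ≤ (𝔼 i ∈ s, y i ^ a) ^ θ * (𝔼 i ∈ s, y i ^ b) ^ (1 - θ) := by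
  refine le_of_eq_of_le (expect_congr rfl fun i _ => ?_) (expect_rpow_mul_rpow_le s
    (fun i => Real.rpow_nonneg (hy i) a) (fun i => Real.rpow_nonneg (hy i) b) hθ0 hθ1)
  have := sub_nonneg.2 hθ1.le
  rw [Real.rpow_add_of_nonneg (hy i) (by positivity) (by positivity), ← Real.rpow_mul (hy i),
    ← Real.rpow_mul (hy i), mul_comm a, mul_comm b]

section Moments

variable {ι : Type*} {s : ℕ → Finset ι} {y : ℕ → ι → ℝ} {S : ℕ → ℝ}

theorem subexpLE_expect_rpow_of_frequently (hs : ∀ n, (s n).Nonempty) (hy : ∀ n i, 0 ≤ y n i)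
    (hS : ∀ n, 0 ≤ S n)
    (h : ∃ᶠ q : ℝ in atTop, SubexpLE (fun n => 𝔼 i ∈ s n, y n i ^ q) (fun n => S n ^ q))
    {p : ℝ} (hp : 0 < p) :
    SubexpLE (fun n => 𝔼 i ∈ s n, y n i ^ p) (fun n => S n ^ p) := by
  obtain ⟨q, hq, hpq⟩ := (h.and_eventually (eventually_gt_atTop p)).exists
  have hq0 : 0 < q := hp.trans hpq
  have hm : ∀ (r : ℝ) n, 0 ≤ 𝔼 i ∈ s n, y n i ^ r :=
    fun r n => expect_nonneg fun i _ => Real.rpow_nonneg (hy n i) r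
  have hjensen : ∀ n, 𝔼 i ∈ s n, y n i ^ p ≤ (𝔼 i ∈ s n, y n i ^ q) ^ (p / q) := fun n => by
    simpa [hq0.ne', hs n] using expect_rpow_interpolation (s n) (hy n) hq0.le le_rfl
      (div_pos hp hq0) ((div_lt_one hq0).2 hpq)
  refine (SubexpLE.of_le (.of_forall hjensen) fun n => Real.rpow_nonneg (hm q n) _).trans ?_
  have hpow := hq.rpow (hm q) (fun n => Real.rpow_nonneg (hS n) q) (div_pos hp hq0)
  simpa only [← Real.rpow_mul (hS _), mul_div_cancel₀ p hq0.ne'] using hpow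

/-- With `θ = b / (b + p)`, the exponent `b` lies between `p` and `b² / p`:
`b = θ p + (1 - θ) (b² / p)`. -/
theorem subexpLE_rpow_expect (hy : ∀ n i, 0 ≤ y n i) (hS : ∀ n, 0 ≤ S n)
    (hpos : ∀ᶠ n in atTop, 0 < S n)
    (hup : ∀ q : ℝ, 0 < q → SubexpLE (fun n => 𝔼 i ∈ s n, y n i ^ q) (fun n => S n ^ q))
    {b : ℝ} (hb : 0 < b)
    (hlow : SubexpLE (fun n => S n ^ b) (fun n => 𝔼 i ∈ s n, y n i ^ b)) {p : ℝ} (hp : 0 < p) :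
    SubexpLE (fun n => S n ^ p) (fun n => 𝔼 i ∈ s n, y n i ^ p) := by
  set θ := b / (b + p) with hθ
  set q := b ^ 2 / p with hq
  have hq0 : 0 < q := by positivity
  have hθ0 : 0 < θ := by positivity
  have hθ1 : θ < 1 := (div_lt_one (by positivity)).2 (by linarith)
  have hbθ : θ * p + (1 - θ) * q = b := by
    rw [hθ, hq]
    field_simp
    ring
  have hm : ∀ (r : ℝ) n, 0 ≤ 𝔼 i ∈ s n, y n i ^ r :=
    fun r n => expect_nonneg fun i _ => Real.rpow_nonneg (hy n i) r
  have hlyapunov : SubexpLE (fun n => S n ^ b)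
      (fun n => (𝔼 i ∈ s n, y n i ^ p) ^ θ * S n ^ ((1 - θ) * q)) := by
    have hinterp : ∀ n, 𝔼 i ∈ s n, y n i ^ b
        ≤ (𝔼 i ∈ s n, y n i ^ p) ^ θ * (𝔼 i ∈ s n, y n i ^ q) ^ (1 - θ) := fun n => by
      simpa only [hbθ] using expect_rpow_interpolation (s n) (hy n) hp.le hq0.le hθ0 hθ1
    have hupq := ((hup q hq0).rpow (hm q) (fun n => Real.rpow_nonneg (hS n) q)
      (sub_pos.2 hθ1)).mul_left fun n => Real.rpow_nonneg (hm p n) θ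
    simp only [← Real.rpow_mul (hS _), mul_comm q] at hupq
    exact (hlow.trans (.of_le (.of_forall hinterp) fun n =>
      mul_nonneg (Real.rpow_nonneg (hm p n) _) (Real.rpow_nonneg (hm q n) _))).trans hupq
  have hcancel : SubexpLE (fun n => S n ^ (θ * p)) (fun n => (𝔼 i ∈ s n, y n i ^ p) ^ θ) := by
    intro δ hδ
    filter_upwards [hlyapunov δ hδ, hpos] with n hn hSn
    rw [← hbθ, Real.rpow_add hSn, ← mul_assoc] at hn
    exact le_of_mul_le_mul_right hn (by positivity)
  have hpow := hcancel.rpow (fun n => Real.rpow_nonneg (hS n) _)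
    (fun n => Real.rpow_nonneg (hm p n) _) (inv_pos.2 hθ0)
  simpa only [← Real.rpow_mul (hS _), ← Real.rpow_mul (hm p _), mul_right_comm θ p,
    mul_inv_cancel₀ hθ0.ne', one_mul, Real.rpow_one] using hpow

end Moments

/-! ### Dyadic martingales -/

theorem expect_range_two_pow_succ (f : ℕ → ℝ) (n : ℕ) :
    𝔼 j ∈ range (2 ^ (n + 1)), f j
      = 𝔼 k ∈ range (2 ^ n), (f (2 * k) + f (2 * k + 1)) / 2 := by
  have hpair : ∀ N, ∑ j ∈ range (2 * N), f j = ∑ k ∈ range N, (f (2 * k) + f (2 * k + 1)) := by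
    intro N
    induction N with
    | zero => simp
    | succ N ih => rw [Nat.mul_succ, sum_range_succ, sum_range_succ, sum_range_succ, ih, add_assoc]
  simp only [expect_eq_sum_div_card, card_range, pow_succ', hpair, ← sum_div, div_div, Nat.cast_mul,
    Nat.cast_two]

theorem expect_range_two_pow_comp_div_two (f : ℕ → ℝ) (n : ℕ) :
    𝔼 j ∈ range (2 ^ (n + 1)), f (j / 2) = 𝔼 k ∈ range (2 ^ n), f k := by
  rw [expect_range_two_pow_succ]
  refine expect_congr rfl fun k _ => ?_
  rw [Nat.mul_div_right k two_pos, Nat.mul_add_div two_pos, Nat.div_eq_of_lt one_lt_two, add_zero,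
    add_self_div_two]

theorem expect_le_of_two_mul_supermartingale {f : ℕ → ℕ → ℝ}
    (hf : ∀ n k, f (n + 1) (2 * k) + f (n + 1) (2 * k + 1) ≤ 2 * f n k) (n : ℕ) :
    𝔼 k ∈ range (2 ^ n), f n k ≤ f 0 0 := by
  induction n with
  | zero => simp
  | succ n ih =>
    rw [expect_range_two_pow_succ]
    exact (expect_le_expect fun k _ => (div_le_iff₀' two_pos).2 (hf n k)).trans ih

/-- A martingale for the dyadic filtration of `[0,1)`: `M n k` is the value on
`[k / 2 ^ n, (k + 1) / 2 ^ n)`, which is the mean of the values on the two halves. The index `k`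
is not restricted to `k < 2 ^ n`. -/
def IsDyadicMartingale (M : ℕ → ℕ → ℝ) : Prop :=
  ∀ n k, M (n + 1) (2 * k) + M (n + 1) (2 * k + 1) = 2 * M n k

/-- The increment of a dyadic martingale from a dyadic interval to its left half; the increment
to the right half is its negative. -/
def dyadicJump (M : ℕ → ℕ → ℝ) (n k : ℕ) : ℝ := M (n + 1) (2 * k) - M n k

/-- The quadratic variation of a dyadic martingale at time `n` on the `k`-th dyadic interval of
generation `n`; `k / 2 ^ (n - m)` is the index of its ancestor in generation `m`. -/
def dyadicQuadVar (M : ℕ → ℕ → ℝ) (n k : ℕ) : ℝ :=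
  M 0 0 ^ 2 + ∑ m ∈ range n, dyadicJump M m (k / 2 ^ (n - m)) ^ 2

theorem apply_two_mul_eq_add_dyadicJump (M : ℕ → ℕ → ℝ) (n k : ℕ) :
    M (n + 1) (2 * k) = M n k + dyadicJump M n k :=
  (add_sub_cancel _ _).symm

theorem dyadicQuadVar_succ (M : ℕ → ℕ → ℝ) (n j : ℕ) :
    dyadicQuadVar M (n + 1) j = dyadicQuadVar M n (j / 2) + dyadicJump M n (j / 2) ^ 2 := by
  have hanc : ∀ m ∈ range n, j / 2 ^ (n + 1 - m) = j / 2 / 2 ^ (n - m) := fun m hm => by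
    rw [Nat.succ_sub (mem_range.1 hm).le, pow_succ', Nat.div_div_eq_div_mul]
  rw [dyadicQuadVar, dyadicQuadVar, sum_range_succ, add_tsub_cancel_left, pow_one, add_assoc,
    sum_congr rfl fun m hm => by rw [hanc m hm]]

theorem dyadicQuadVar_nonneg (M : ℕ → ℕ → ℝ) (n k : ℕ) : 0 ≤ dyadicQuadVar M n k := by
  unfold dyadicQuadVar
  positivity

namespace IsDyadicMartingale

variable {M : ℕ → ℕ → ℝ}

theorem apply_two_mul_add_one_eq_sub_dyadicJump (hM : IsDyadicMartingale M) (n k : ℕ) :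
    M (n + 1) (2 * k + 1) = M n k - dyadicJump M n k := by
  rw [dyadicJump]
  linarith [hM n k]

theorem expect_sq (hM : IsDyadicMartingale M) (n : ℕ) :
    𝔼 k ∈ range (2 ^ n), M n k ^ 2
      = M 0 0 ^ 2 + ∑ m ∈ range n, 𝔼 k ∈ range (2 ^ m), dyadicJump M m k ^ 2 := by
  induction n with
  | zero => simp
  | succ n ih =>
    rw [expect_range_two_pow_succ, sum_range_succ, ← add_assoc, ← ih, ← expect_add_distrib]
    refine expect_congr rfl fun k _ => ?_
    rw [apply_two_mul_eq_add_dyadicJump M, hM.apply_two_mul_add_one_eq_sub_dyadicJump]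
    ring

end IsDyadicMartingale

/-! ### Burkholder's inequality for even exponents -/

theorem abs_pow_mul_pow_le (a d : ℝ) {i j r : ℕ} (hij : i + j = 2 * r) :
    |d ^ i * a ^ j| ≤ (a ^ 2 + d ^ 2) ^ r := by
  refine abs_le_of_sq_le_sq ?_ (by positivity)
  calc (d ^ i * a ^ j) ^ 2 = (d ^ 2) ^ i * (a ^ 2) ^ j := by ring
    _ ≤ (a ^ 2 + d ^ 2) ^ i * (a ^ 2 + d ^ 2) ^ j := by
      gcongr
      · exact le_add_of_nonneg_left (sq_nonneg a)
      · exact le_add_of_nonneg_right (sq_nonneg d)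
    _ = ((a ^ 2 + d ^ 2) ^ r) ^ 2 := by rw [← pow_add, hij, pow_mul']

theorem add_pow_two_mul_add_two_le (a d : ℝ) (r : ℕ) :
    (a + d) ^ (2 * r + 2) ≤ a ^ (2 * r + 2) + (2 * r + 2) * (a ^ (2 * r + 1) * d)
      + 4 ^ (r + 1) * (d ^ 2 * (a ^ 2 + d ^ 2) ^ r) := by
  have hbinom : (a + d) ^ (2 * r + 2) = a ^ (2 * r + 2) + (2 * r + 2) * (a ^ (2 * r + 1) * d)
      + ∑ i ∈ range (2 * r + 1),
          d ^ 2 * (d ^ i * a ^ (2 * r - i)) * (2 * r + 2).choose (i + 2) := by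
    rw [add_comm a d, add_pow, sum_range_succ', sum_range_succ', add_comm, add_comm (∑ i ∈ _, _),
      ← add_assoc]
    congr 1
    · simp only [pow_zero, tsub_zero, one_mul, Nat.choose_zero_right, Nat.cast_one, mul_one,
        zero_add, pow_one, Nat.add_one_sub_one, Nat.choose_one_right, Nat.cast_add, Nat.cast_mul,
        Nat.cast_ofNat]
      ring
    · refine sum_congr rfl fun i _ => ?_
      rw [Nat.add_sub_add_right, pow_add d i 2]
      ring
  have hchoose : ∑ i ∈ range (2 * r + 1), ((2 * r + 2).choose (i + 2) : ℝ) ≤ 4 ^ (r + 1) := by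
    have hsum := Nat.sum_range_choose (2 * r + 2)
    rw [sum_range_succ', sum_range_succ', ← mul_add_one, pow_mul] at hsum
    exact_mod_cast (Nat.le_add_right _ _).trans ((Nat.le_add_right _ _).trans hsum.le)
  rw [hbinom]
  gcongr
  calc ∑ i ∈ range (2 * r + 1), d ^ 2 * (d ^ i * a ^ (2 * r - i)) * (2 * r + 2).choose (i + 2)
      ≤ ∑ i ∈ range (2 * r + 1), d ^ 2 * (a ^ 2 + d ^ 2) ^ r * (2 * r + 2).choose (i + 2) := by
        gcongr with i hi
        exact (le_abs_self _).trans (abs_pow_mul_pow_le a d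
          (Nat.add_sub_of_le (Nat.lt_succ_iff.1 (mem_range.1 hi))))
    _ ≤ 4 ^ (r + 1) * (d ^ 2 * (a ^ 2 + d ^ 2) ^ r) := by
        rw [← mul_sum, mul_comm]
        gcongr

theorem add_pow_add_sub_pow_le (a d : ℝ) (r : ℕ) :
    (a + d) ^ (2 * r + 2) + (a - d) ^ (2 * r + 2)
      ≤ 2 * (a ^ (2 * r + 2) + 4 ^ (r + 1) * (d ^ 2 * (a ^ 2 + d ^ 2) ^ r)) := by
  have hright := add_pow_two_mul_add_two_le a d r
  have hleft := add_pow_two_mul_add_two_le a (-d) r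
  rw [neg_sq, ← sub_eq_add_neg, mul_neg, mul_neg] at hleft
  linarith

/-- The Lyapunov term `(M² + [M])^r [M]` in terms of `a = M` and `q = [M]`. -/
def burkholderTerm (r : ℕ) (a q : ℝ) : ℝ := (a ^ 2 + q) ^ r * q

theorem burkholderTerm_add_le {a d q : ℝ} (hq : 0 ≤ q) (r : ℕ) :
    2 * (burkholderTerm r a q + d ^ 2 * (a ^ 2 + d ^ 2) ^ r)
      ≤ burkholderTerm r (a + d) (q + d ^ 2) + burkholderTerm r (a - d) (q + d ^ 2) := by
  have hconvex : 2 * (a ^ 2 + d ^ 2 + q + d ^ 2) ^ r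
      ≤ ((a + d) ^ 2 + (q + d ^ 2)) ^ r + ((a - d) ^ 2 + (q + d ^ 2)) ^ r := by
    have := (convexOn_pow r).2 (x := (a + d) ^ 2 + (q + d ^ 2)) (y := (a - d) ^ 2 + (q + d ^ 2))
      (Set.mem_Ici.2 (by positivity)) (Set.mem_Ici.2 (by positivity))
      (one_half_pos (α := ℝ)).le one_half_pos.le (add_halves 1)
    simp only [smul_eq_mul] at this
    rw [show a ^ 2 + d ^ 2 + q + d ^ 2
      = 1 / 2 * ((a + d) ^ 2 + (q + d ^ 2)) + 1 / 2 * ((a - d) ^ 2 + (q + d ^ 2)) by ring]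
    linarith
  have hq_le : (a ^ 2 + q) ^ r * q ≤ (a ^ 2 + d ^ 2 + q + d ^ 2) ^ r * q := by
    gcongr ?_ ^ r * _
    linarith [sq_nonneg d]
  have hd_le : (a ^ 2 + d ^ 2) ^ r * d ^ 2 ≤ (a ^ 2 + d ^ 2 + q + d ^ 2) ^ r * d ^ 2 := by
    gcongr ?_ ^ r * _
    linarith [sq_nonneg d]
  have hscaled := mul_le_mul_of_nonneg_right hconvex (by positivity : 0 ≤ q + d ^ 2)
  unfold burkholderTerm
  linarith

theorem mul_burkholderTerm_le {a q C : ℝ} (hq : 0 ≤ q) (hC : 1 ≤ C) (r : ℕ) :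
    C * burkholderTerm r a q
      ≤ a ^ (2 * r + 2) / 2 + C * (2 ^ (r + 1) * C + 1) ^ r * q ^ (r + 1) := by
  unfold burkholderTerm
  set K := 2 ^ (r + 1) * C with hK
  have hK1 : 1 ≤ K := one_le_mul_of_one_le_of_one_le (one_le_pow₀ one_le_two) hC
  rcases le_total (K * q) (a ^ 2) with hle | hle
  · have hqa : a ^ 2 + q ≤ 2 * a ^ 2 := by nlinarith
    calc C * ((a ^ 2 + q) ^ r * q) ≤ C * ((2 * a ^ 2) ^ r * q) := by gcongr
      _ = (a ^ 2) ^ r * (K * q) / 2 := by rw [hK, mul_pow, pow_succ]; ring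
      _ ≤ (a ^ 2) ^ r * a ^ 2 / 2 := by gcongr
      _ = a ^ (2 * r + 2) / 2 := by rw [← pow_succ, ← pow_mul, mul_add_one]
      _ ≤ _ := le_add_of_nonneg_right (by positivity)
  · calc C * ((a ^ 2 + q) ^ r * q) ≤ C * ((K * q + q) ^ r * q) := by gcongr
      _ = C * (K + 1) ^ r * q ^ (r + 1) := by rw [← add_one_mul, mul_pow]; ring
      _ ≤ _ := le_add_of_nonneg_left (by rw [← mul_add_one, pow_mul]; positivity)

/-- The process `M^(2r+2) - 4^(r+1) (M² + [M])^r [M]` is a supermartingale with nonpositive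
initial value. -/
theorem IsDyadicMartingale.expect_pow_le_burkholderTerm {M : ℕ → ℕ → ℝ}
    (hM : IsDyadicMartingale M) (r n : ℕ) :
    𝔼 k ∈ range (2 ^ n), M n k ^ (2 * r + 2)
      ≤ 4 ^ (r + 1) * 𝔼 k ∈ range (2 ^ n), burkholderTerm r (M n k) (dyadicQuadVar M n k) := by
  set P : ℕ → ℕ → ℝ := fun n k =>
    M n k ^ (2 * r + 2) - 4 ^ (r + 1) * burkholderTerm r (M n k) (dyadicQuadVar M n k) with hP
  have hsuper : ∀ n k, P (n + 1) (2 * k) + P (n + 1) (2 * k + 1) ≤ 2 * P n k := by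
    intro n k
    have hhalf : (2 * k + 1) / 2 = k := by omega
    simp only [hP, dyadicQuadVar_succ, Nat.mul_div_right k two_pos, hhalf,
      apply_two_mul_eq_add_dyadicJump M, hM.apply_two_mul_add_one_eq_sub_dyadicJump]
    have hpow := add_pow_add_sub_pow_le (M n k) (dyadicJump M n k) r
    have hterm := mul_le_mul_of_nonneg_left
      (burkholderTerm_add_le (a := M n k) (d := dyadicJump M n k) (dyadicQuadVar_nonneg M n k) r)
      (by positivity : (0 : ℝ) ≤ 4 ^ (r + 1))
    linarith
  have hinit : P 0 0 ≤ 0 := by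
    have hone : M 0 0 ^ (2 * r + 2) ≤ burkholderTerm r (M 0 0) (M 0 0 ^ 2) := by
      rw [burkholderTerm, pow_add, pow_mul]
      gcongr
      exact le_add_of_nonneg_left (sq_nonneg _)
    have hpos : 0 ≤ burkholderTerm r (M 0 0) (M 0 0 ^ 2) := by
      unfold burkholderTerm
      positivity
    simp only [hP, dyadicQuadVar, range_zero, sum_empty, add_zero, sub_nonpos]
    exact hone.trans (le_mul_of_one_le_left hpos (one_le_pow₀ (by norm_num)))
  have hexp := (expect_le_of_two_mul_supermartingale hsuper n).trans hinit
  simpa only [hP, expect_sub_distrib, ← mul_expect, sub_nonpos] using hexp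

theorem IsDyadicMartingale.expect_pow_le_expect_dyadicQuadVar_pow {M : ℕ → ℕ → ℝ}
    (hM : IsDyadicMartingale M) (r n : ℕ) :
    𝔼 k ∈ range (2 ^ n), M n k ^ (2 * r + 2)
      ≤ 2 * (4 ^ (r + 1) * (2 ^ (r + 1) * 4 ^ (r + 1) + 1) ^ r)
        * 𝔼 k ∈ range (2 ^ n), dyadicQuadVar M n k ^ (r + 1) := by
  have hlyapunov := hM.expect_pow_le_burkholderTerm r n
  have habsorb := expect_le_expect fun k (_ : k ∈ range (2 ^ n)) =>
    mul_burkholderTerm_le (a := M n k) (dyadicQuadVar_nonneg M n k)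
      (one_le_pow₀ (by norm_num) : (1 : ℝ) ≤ 4 ^ (r + 1)) r
  rw [expect_add_distrib, ← mul_expect, ← mul_expect, ← expect_div] at habsorb
  linarith

/-! ### The martingale of dyadic slopes -/

theorem two_mul_div_two_pow_succ (a : ℝ) (n : ℕ) : 2 * a / 2 ^ (n + 1) = a / 2 ^ n := by
  rw [pow_succ', mul_div_mul_left _ _ two_ne_zero]

section Slopes

variable (x : ℝ → ℝ)

/-- The slope of the chord of `x` over `[k / 2 ^ n, (k + 1) / 2 ^ n]`. -/
def dyadicSlope (n k : ℕ) : ℝ := 2 ^ n * (x (((k : ℝ) + 1) / 2 ^ n) - x ((k : ℝ) / 2 ^ n))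

theorem isDyadicMartingale_dyadicSlope : IsDyadicMartingale (dyadicSlope x) := by
  intro n k
  have hright : (2 * (k : ℝ) + 1 + 1) / 2 ^ (n + 1) = (k + 1) / 2 ^ n := by
    rw [add_assoc, one_add_one_eq_two, ← mul_add_one, two_mul_div_two_pow_succ]
  simp only [dyadicSlope, Nat.cast_add, Nat.cast_mul, Nat.cast_one, Nat.cast_ofNat,
    two_mul_div_two_pow_succ, hright]
  ring

theorem dyadicJump_dyadicSlope_sq (n k : ℕ) :
    dyadicJump (dyadicSlope x) n k ^ 2 = 2 ^ n * fsCoeff x n k ^ 2 := by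
  have hscale : ((2 : ℝ) ^ ((n : ℝ) / 2)) ^ 2 = 2 ^ n := by
    rw [← Real.rpow_mul_natCast two_pos.le, Nat.cast_two, div_mul_cancel₀ _ two_ne_zero,
      Real.rpow_natCast]
  simp only [dyadicJump, dyadicSlope, fsCoeff, Nat.cast_mul, Nat.cast_ofNat,
    two_mul_div_two_pow_succ, mul_pow, hscale]
  ring

theorem sSeq_nonneg (n : ℕ) : 0 ≤ sSeq x n := Real.sqrt_nonneg _

theorem sSeq_sq (n : ℕ) :
    sSeq x n ^ 2 = ∑ m ∈ range n, ∑ k ∈ range (2 ^ m), fsCoeff x m k ^ 2 :=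
  Real.sq_sqrt (sum_nonneg fun _ _ => sum_nonneg fun _ _ => sq_nonneg _)

theorem monotone_sSeq : Monotone (sSeq x) := fun _ _ h =>
  Real.sqrt_le_sqrt (sum_le_sum_of_subset_of_nonneg (range_mono h) fun _ _ _ =>
    sum_nonneg fun _ _ => sq_nonneg _)

/-- The root mean square of the slopes of `x` over the dyadic intervals of generation `n`. -/
def slopeRms (n : ℕ) : ℝ := √(𝔼 k ∈ range (2 ^ n), dyadicSlope x n k ^ 2)

theorem slopeRms_nonneg (n : ℕ) : 0 ≤ slopeRms x n := Real.sqrt_nonneg _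

theorem slopeRms_sq (n : ℕ) : slopeRms x n ^ 2 = 𝔼 k ∈ range (2 ^ n), dyadicSlope x n k ^ 2 :=
  Real.sq_sqrt (expect_nonneg fun _ _ => sq_nonneg _)

theorem slopeRms_sq_eq_add_sSeq_sq (n : ℕ) :
    slopeRms x n ^ 2 = dyadicSlope x 0 0 ^ 2 + sSeq x n ^ 2 := by
  rw [slopeRms_sq, (isDyadicMartingale_dyadicSlope x).expect_sq, sSeq_sq]
  congr 1
  refine sum_congr rfl fun m _ => ?_
  simp only [dyadicJump_dyadicSlope_sq, ← mul_expect]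
  simpa using card_mul_expect (range (2 ^ m)) fun k => fsCoeff x m k ^ 2

theorem monotone_slopeRms : Monotone (slopeRms x) := fun m n h => by
  refine (sq_le_sq₀ (slopeRms_nonneg x m) (slopeRms_nonneg x n)).1 ?_
  rw [slopeRms_sq_eq_add_sSeq_sq, slopeRms_sq_eq_add_sSeq_sq]
  gcongr
  · exact sSeq_nonneg x m
  · exact monotone_sSeq x h

theorem sSeq_le_slopeRms (n : ℕ) : sSeq x n ≤ slopeRms x n := by
  refine (sq_le_sq₀ (sSeq_nonneg x n) (slopeRms_nonneg x n)).1 ?_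
  rw [slopeRms_sq_eq_add_sSeq_sq]
  exact le_add_of_nonneg_left (sq_nonneg _)

theorem abs_dyadicSlope_zero_le_slopeRms (n : ℕ) : |dyadicSlope x 0 0| ≤ slopeRms x n := by
  refine abs_le_of_sq_le_sq ?_ (slopeRms_nonneg x n)
  rw [slopeRms_sq_eq_add_sSeq_sq]
  exact le_add_of_nonneg_right (sq_nonneg _)

theorem slopeRms_le_abs_add_sSeq (n : ℕ) : slopeRms x n ≤ |dyadicSlope x 0 0| + sSeq x n := by
  have hs := sSeq_nonneg x n
  refine (sq_le_sq₀ (slopeRms_nonneg x n) (by positivity)).1 ?_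
  rw [slopeRms_sq_eq_add_sSeq_sq, ← sq_abs (dyadicSlope x 0 0)]
  nlinarith [mul_nonneg (abs_nonneg (dyadicSlope x 0 0)) hs]

/-- The square function of the Faber–Schauder expansion at time `n` on the `k`-th dyadic interval
of generation `n - 1`: `RJquantity x p n` is its `p`-th moment. -/
def fsSquareFn (n k : ℕ) : ℝ :=
  √(∑ m ∈ range n, 2 ^ m * fsCoeff x m (k / 2 ^ (n - 1 - m)) ^ 2)

theorem fsSquareFn_nonneg (n k : ℕ) : 0 ≤ fsSquareFn x n k := Real.sqrt_nonneg _

theorem RJquantity_eq_expect (p : ℝ) (n : ℕ) :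
    RJquantity x p n = 𝔼 k ∈ range (2 ^ (n - 1)), fsSquareFn x n k ^ p := by
  simp only [RJquantity, fsSquareFn, expect_eq_sum_div_card, card_range, Nat.cast_pow,
    Nat.cast_ofNat]
  congr 1
  exact sum_congr rfl fun k _ => Real.rpow_div_two_eq_sqrt p (by positivity)

theorem dyadicQuadVar_dyadicSlope_succ (n j : ℕ) :
    dyadicQuadVar (dyadicSlope x) (n + 1) j
      = dyadicSlope x 0 0 ^ 2 + fsSquareFn x (n + 1) (j / 2) ^ 2 := by
  rw [dyadicQuadVar, fsSquareFn, Real.sq_sqrt (by positivity)]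
  congr 1
  refine sum_congr rfl fun m hm => ?_
  rw [dyadicJump_dyadicSlope_sq, Nat.succ_sub (Nat.lt_succ_iff.1 (mem_range.1 hm)),
    pow_succ' 2 (n - m), Nat.div_div_eq_div_mul, add_tsub_cancel_right]

theorem expect_dyadicQuadVar_dyadicSlope_pow_le (r n : ℕ) :
    𝔼 j ∈ range (2 ^ (n + 1)), dyadicQuadVar (dyadicSlope x) (n + 1) j ^ r
      ≤ 2 ^ (r - 1) * (|dyadicSlope x 0 0| ^ (2 * r) + RJquantity x (2 * r) (n + 1)) := by
  have hnonempty : (range (2 ^ n)).Nonempty := nonempty_range_iff.2 (by positivity)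
  have hcast : (2 * r : ℝ) = (2 * r : ℕ) := by push_cast; rfl
  rw [RJquantity_eq_expect, hcast]
  simp only [dyadicQuadVar_dyadicSlope_succ, Real.rpow_natCast]
  rw [expect_range_two_pow_comp_div_two
      (fun k => (dyadicSlope x 0 0 ^ 2 + fsSquareFn x (n + 1) k ^ 2) ^ r),
    ← expect_const hnonempty (|dyadicSlope x 0 0| ^ (2 * r)), add_tsub_cancel_right,
    ← expect_add_distrib, mul_expect]
  refine expect_le_expect fun k _ => ?_
  simpa only [pow_mul, sq_abs] using add_pow_le (sq_nonneg _) (sq_nonneg _) r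

end Slopes

/-! ### Moments of the dyadic slopes -/

section SlopeMoments

variable {x : ℝ → ℝ}

theorem subexpLE_RJquantity_of_frequently
    (h : ∃ᶠ q : ℝ in atTop, SubexpLE (RJquantity x q) (fun n => sSeq x n ^ q)) {p : ℝ}
    (hp : 0 < p) : SubexpLE (RJquantity x p) (fun n => sSeq x n ^ p) := by
  have hRJ : ∀ q, RJquantity x q = fun n => 𝔼 k ∈ range (2 ^ (n - 1)), fsSquareFn x n k ^ q :=
    fun q => funext (RJquantity_eq_expect x q)
  simp only [hRJ] at h ⊢
  exact subexpLE_expect_rpow_of_frequently (fun n => nonempty_range_iff.2 (by positivity))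
    (fsSquareFn_nonneg x) (sSeq_nonneg x) h hp

theorem subexpLE_expect_dyadicSlope_pow (r : ℕ)
    (hRJ : SubexpLE (RJquantity x (2 * (r + 1 : ℕ))) (fun n => sSeq x n ^ (2 * r + 2))) :
    SubexpLE (fun n => 𝔼 k ∈ range (2 ^ n), dyadicSlope x n k ^ (2 * r + 2))
      (fun n => slopeRms x n ^ (2 * r + 2)) := by
  have hS : ∀ n, 0 ≤ slopeRms x n ^ (2 * r + 2) := fun n => pow_nonneg (slopeRms_nonneg x n) _
  have hsquare : SubexpLE
      (fun n => |dyadicSlope x 0 0| ^ (2 * r + 2) + RJquantity x (2 * (r + 1 : ℕ)) n)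
      (fun n => slopeRms x n ^ (2 * r + 2)) :=
    .add (.of_le (.of_forall fun n => pow_le_pow_left₀ (abs_nonneg _)
        (abs_dyadicSlope_zero_le_slopeRms x n) _) hS)
      (hRJ.trans (.of_le (.of_forall fun n => pow_le_pow_left₀ (sSeq_nonneg x n)
        (sSeq_le_slopeRms x n) _) hS)) hS
  refine SubexpLE.trans (.of_le_const_mul
    (C := 2 * (4 ^ (r + 1) * (2 ^ (r + 1) * 4 ^ (r + 1) + 1) ^ r) * 2 ^ r) ?_ fun n => ?_) hsquare
  · filter_upwards [eventually_ne_atTop 0] with n hn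
    obtain ⟨n, rfl⟩ := Nat.exists_eq_succ_of_ne_zero hn
    refine ((isDyadicMartingale_dyadicSlope x).expect_pow_le_expect_dyadicQuadVar_pow r _).trans ?_
    rw [mul_assoc _ (2 ^ r)]
    gcongr
    exact expect_dyadicQuadVar_dyadicSlope_pow_le x (r + 1) n
  · rw [RJquantity_eq_expect]
    have hmoment : 0 ≤ 𝔼 k ∈ range (2 ^ (n - 1)), fsSquareFn x n k ^ (2 * (r + 1 : ℕ) : ℝ) :=
      expect_nonneg fun k _ => Real.rpow_nonneg (fsSquareFn_nonneg x n k) _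
    positivity

theorem subexpLE_expect_abs_dyadicSlope_rpow
    (hRJ : ∃ᶠ q : ℝ in atTop, SubexpLE (RJquantity x q) (fun n => sSeq x n ^ q)) {p : ℝ}
    (hp : 0 < p) :
    SubexpLE (fun n => 𝔼 k ∈ range (2 ^ n), |dyadicSlope x n k| ^ p)
      (fun n => slopeRms x n ^ p) := by
  refine subexpLE_expect_rpow_of_frequently (fun n => nonempty_range_iff.2 (by positivity))
    (fun n k => abs_nonneg _) (slopeRms_nonneg x) (frequently_atTop.2 fun a => ?_) hp
  set r := ⌈a⌉₊
  have hcast : (2 * (r + 1 : ℕ) : ℝ) = (2 * r + 2 : ℕ) := by push_cast; ring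
  have heven : Even (2 * r + 2) := by simp [parity_simps]
  refine ⟨(2 * r + 2 : ℕ), ?_, ?_⟩
  · have := Nat.le_ceil a
    push_cast
    linarith [(Nat.cast_nonneg r : (0 : ℝ) ≤ r)]
  · simp only [Real.rpow_natCast, heven.pow_abs]
    refine subexpLE_expect_dyadicSlope_pow r ?_
    simpa only [hcast, Real.rpow_natCast] using
      subexpLE_RJquantity_of_frequently hRJ (p := 2 * (r + 1 : ℕ)) (by positivity)

theorem subexpLE_rpow_slopeRms
    (hRJ : ∃ᶠ q : ℝ in atTop, SubexpLE (RJquantity x q) (fun n => sSeq x n ^ q))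
    (hpos : ∀ᶠ n in atTop, 0 < slopeRms x n) {p : ℝ} (hp : 0 < p) :
    SubexpLE (fun n => slopeRms x n ^ p)
      (fun n => 𝔼 k ∈ range (2 ^ n), |dyadicSlope x n k| ^ p) := by
  refine subexpLE_rpow_expect (fun n k => abs_nonneg _) (slopeRms_nonneg x) hpos
    (fun q hq => subexpLE_expect_abs_dyadicSlope_rpow hRJ hq) two_pos ?_ hp
  refine .of_le (.of_forall fun n => ?_) fun n =>
    expect_nonneg fun k _ => Real.rpow_nonneg (abs_nonneg _) _
  simp only [Real.rpow_two, sq_abs, slopeRms_sq, le_refl]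

end SlopeMoments

/-! ### Dyadic variations -/

section DyadicVar

variable (x : ℝ → ℝ)

theorem dyadicVar_nonneg (p : ℝ) (n : ℕ) : 0 ≤ dyadicVar x p n :=
  sum_nonneg fun _ _ => Real.rpow_nonneg (abs_nonneg _) p

theorem dyadicVar_eq_expect_dyadicSlope (p : ℝ) (n : ℕ) :
    dyadicVar x p n = 2 ^ ((1 - p) * n) * 𝔼 k ∈ range (2 ^ n), |dyadicSlope x n k| ^ p := by
  have hscale : (2 : ℝ) ^ ((1 - p) * n) * (2 ^ n) ^ p = 2 ^ n := by
    rw [← Real.rpow_natCast, ← Real.rpow_mul two_pos.le, ← Real.rpow_add two_pos]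
    ring_nf
  have hincrement : ∀ k, |dyadicSlope x n k| ^ p
      = (2 ^ n) ^ p * |x (((k : ℝ) + 1) / 2 ^ n) - x ((k : ℝ) / 2 ^ n)| ^ p := fun k => by
    rw [dyadicSlope, abs_mul, abs_of_pos (by positivity : (0 : ℝ) < 2 ^ n),
      Real.mul_rpow (by positivity) (abs_nonneg _)]
  simp only [hincrement, ← mul_expect]
  rw [← mul_assoc, hscale, dyadicVar]
  simpa using (card_mul_expect (range (2 ^ n)) fun k =>
    |x (((k : ℝ) + 1) / 2 ^ n) - x ((k : ℝ) / 2 ^ n)| ^ p).symm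

/-- The value `1` comes from `Real.log 0 = 0`. -/
theorem two_rpow_xiSeq_mul {n : ℕ} (hn : n ≠ 0) :
    (2 : ℝ) ^ (xiSeq x n * n) = if sSeq x n = 0 then 1 else sSeq x n := by
  rw [xiSeq, div_mul_cancel₀ _ (Nat.cast_ne_zero.2 hn)]
  split_ifs with hs
  · simp [hs]
  · exact Real.rpow_logb two_pos (by norm_num) ((sSeq_nonneg x n).lt_of_ne' hs)

variable {x}

theorem slopeRms_isTheta_two_rpow_xiSeq (hpos : ∀ᶠ n in atTop, 0 < slopeRms x n) :
    slopeRms x =Θ[atTop] fun n => (2 : ℝ) ^ (xiSeq x n * n) := by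
  by_cases hs : ∀ n, sSeq x n = 0
  · have hconst : slopeRms x = fun _ => |dyadicSlope x 0 0| := funext fun n =>
      le_antisymm (by simpa [hs] using slopeRms_le_abs_add_sSeq x n)
        (abs_dyadicSlope_zero_le_slopeRms x n)
    have hone : (fun n => (2 : ℝ) ^ (xiSeq x n * n)) =ᶠ[atTop] fun _ => (1 : ℝ) := by
      filter_upwards [eventually_ne_atTop 0] with n hn
      simp [two_rpow_xiSeq_mul x hn, hs]
    refine IsTheta.trans ?_ hone.symm.isTheta
    rw [hconst, isTheta_const_const_iff]
    obtain ⟨n, hn⟩ := hpos.exists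
    rw [hconst] at hn
    simp [hn.ne']
  · obtain ⟨N, hN⟩ := not_forall.1 hs
    have hN0 : 0 < sSeq x N := (sSeq_nonneg x N).lt_of_ne' hN
    have hξ : (fun n => (2 : ℝ) ^ (xiSeq x n * n)) =ᶠ[atTop] sSeq x := by
      filter_upwards [eventually_ne_atTop 0, eventually_ge_atTop N] with n hn hNn
      rw [two_rpow_xiSeq_mul x hn, if_neg (hN0.trans_le (monotone_sSeq x hNn)).ne']
    refine IsTheta.trans ⟨.of_bound (|dyadicSlope x 0 0| / sSeq x N + 1) ?_, .of_bound 1 ?_⟩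
      hξ.symm.isTheta
    · filter_upwards [eventually_ge_atTop N] with n hNn
      rw [Real.norm_of_nonneg (slopeRms_nonneg x n), Real.norm_of_nonneg (sSeq_nonneg x n)]
      calc slopeRms x n ≤ |dyadicSlope x 0 0| / sSeq x N * sSeq x N + sSeq x n := by
            rw [div_mul_cancel₀ _ hN]
            exact slopeRms_le_abs_add_sSeq x n
        _ ≤ |dyadicSlope x 0 0| / sSeq x N * sSeq x n + sSeq x n := by
            gcongr
            exact monotone_sSeq x hNn
        _ = (|dyadicSlope x 0 0| / sSeq x N + 1) * sSeq x n := by ring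
    · refine .of_forall fun n => ?_
      rw [Real.norm_of_nonneg (slopeRms_nonneg x n), Real.norm_of_nonneg (sSeq_nonneg x n),
        one_mul]
      exact sSeq_le_slopeRms x n

theorem two_rpow_exponent_eq {p : ℝ} (hp : p ≠ 0) (ξ : ℝ) (n : ℕ) :
    (2 : ℝ) ^ (p * (ξ - (1 - p⁻¹)) * n) = 2 ^ ((1 - p) * n) * (2 ^ (ξ * n)) ^ p := by
  rw [← Real.rpow_mul two_pos.le, ← Real.rpow_add two_pos]
  congr 1
  field_simp
  ring

theorem subexpLE_dyadicVar_two_rpow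
    (hRJ : ∃ᶠ q : ℝ in atTop, SubexpLE (RJquantity x q) (fun n => sSeq x n ^ q))
    (hpos : ∀ᶠ n in atTop, 0 < slopeRms x n) {p : ℝ} (hp : 0 < p) :
    SubexpLE (dyadicVar x p) (fun n => 2 ^ (p * (xiSeq x n - (1 - p⁻¹)) * n)) := by
  have hslope : SubexpLE (slopeRms x) (fun n => 2 ^ (xiSeq x n * n)) :=
    .of_isBigO (slopeRms_isTheta_two_rpow_xiSeq hpos).isBigO fun n => by positivity
  have hmoment := (subexpLE_expect_abs_dyadicSlope_rpow hRJ hp).trans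
    (hslope.rpow (slopeRms_nonneg x) (fun n => by positivity) hp)
  rw [funext (dyadicVar_eq_expect_dyadicSlope x p)]
  simp only [two_rpow_exponent_eq hp.ne']
  exact hmoment.mul_left fun n => by positivity

theorem subexpLE_two_rpow_dyadicVar
    (hRJ : ∃ᶠ q : ℝ in atTop, SubexpLE (RJquantity x q) (fun n => sSeq x n ^ q))
    (hpos : ∀ᶠ n in atTop, 0 < slopeRms x n) {p : ℝ} (hp : 0 < p) :
    SubexpLE (fun n => 2 ^ (p * (xiSeq x n - (1 - p⁻¹)) * n)) (dyadicVar x p) := by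
  have hslope : SubexpLE (fun n => 2 ^ (xiSeq x n * n)) (slopeRms x) :=
    .of_isBigO (slopeRms_isTheta_two_rpow_xiSeq hpos).isBigO_symm (slopeRms_nonneg x)
  have hmoment := (hslope.rpow (fun n => by positivity) (slopeRms_nonneg x) hp).trans
    (subexpLE_rpow_slopeRms hRJ hpos hp)
  rw [funext (dyadicVar_eq_expect_dyadicSlope x p)]
  simp only [two_rpow_exponent_eq hp.ne']
  exact hmoment.mul_left fun n => by positivity

end DyadicVar

/-! ### The exponents and nonconstancy -/

theorem isBoundedUnder_ge_xiSeq (x : ℝ → ℝ) : IsBoundedUnder (· ≥ ·) atTop (xiSeq x) := by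
  by_cases hs : ∀ n, sSeq x n = 0
  · exact isBoundedUnder_of ⟨0, fun n => by simp [xiSeq, hs]⟩
  obtain ⟨N, hN⟩ := not_forall.1 hs
  have hN0 : 0 < sSeq x N := (sSeq_nonneg x N).lt_of_ne' hN
  refine isBoundedUnder_of_eventually_ge (a := -|Real.logb 2 (sSeq x N)|) ?_
  filter_upwards [eventually_ge_atTop 1, eventually_ge_atTop N] with n hn hNn
  have hn' : (1 : ℝ) ≤ n := Nat.one_le_cast.2 hn
  have hlog : Real.logb 2 (sSeq x N) ≤ Real.logb 2 (sSeq x n) :=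
    Real.logb_le_logb_of_le one_lt_two hN0 (monotone_sSeq x hNn)
  rw [xiSeq, le_div_iff₀ (by linarith)]
  nlinarith [neg_abs_le (Real.logb 2 (sSeq x N)), abs_nonneg (Real.logb 2 (sSeq x N))]

theorem xiSeq_le_of_sSeq_le {x : ℝ → ℝ} {C : ℝ} (hC : 1 ≤ C) {n : ℕ} (h : sSeq x n ≤ C * 2 ^ n) :
    xiSeq x n ≤ Real.logb 2 C + 1 := by
  have hlogC : 0 ≤ Real.logb 2 C := Real.logb_nonneg one_lt_two hC
  rcases (sSeq_nonneg x n).eq_or_lt' with hs | hs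
  · rw [xiSeq, hs, Real.logb_zero, zero_div]
    positivity
  rcases eq_or_ne n 0 with rfl | hn
  · rw [xiSeq, Nat.cast_zero, div_zero]
    positivity
  have hn1 : (1 : ℝ) ≤ n := Nat.one_le_cast.2 (Nat.one_le_iff_ne_zero.2 hn)
  rw [xiSeq, div_le_iff₀ (by linarith)]
  calc Real.logb 2 (sSeq x n) ≤ Real.logb 2 (C * 2 ^ n) := Real.logb_le_logb_of_le one_lt_two hs h
    _ = Real.logb 2 C + n := by
      rw [Real.logb_mul (by positivity) (by positivity), Real.logb_pow,
        Real.logb_self_eq_one one_lt_two, mul_one]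
    _ ≤ (Real.logb 2 C + 1) * n := by nlinarith

/-- The dyadic rationals of `[0,1]`, the only points seen by `dyadicVar` and `fsCoeff`. -/
def dyadicPoints : Set ℝ := {t | ∃ n k : ℕ, k ≤ 2 ^ n ∧ (k : ℝ) / 2 ^ n = t}

theorem dyadicPoints_subset_Icc : dyadicPoints ⊆ Set.Icc 0 1 := by
  rintro _ ⟨n, k, hk, rfl⟩
  exact ⟨by positivity, div_le_one_of_le₀ (by exact_mod_cast hk) (by positivity)⟩

theorem Icc_subset_closure_dyadicPoints : Set.Icc 0 1 ⊆ closure dyadicPoints := by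
  intro t ht
  have hfloor : Tendsto (fun n : ℕ => (⌊t * 2 ^ n⌋₊ : ℝ) / 2 ^ n) atTop (nhds t) :=
    (tendsto_nat_floor_mul_div_atTop ht.1).comp (tendsto_pow_atTop_atTop_of_one_lt one_lt_two)
  refine mem_closure_of_tendsto hfloor (.of_forall fun n => ⟨n, _, ?_, rfl⟩)
  refine Nat.floor_le_of_le ?_
  push_cast
  exact mul_le_of_le_one_left (by positivity) ht.2

theorem Nonconstant.nontrivial_image_dyadicPoints {x : ℝ → ℝ} (hnc : Nonconstant x)
    (hx : ContinuousOn x (Set.Icc 0 1)) : (x '' dyadicPoints).Nontrivial := by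
  by_contra hconst
  have hzero : (0 : ℝ) ∈ dyadicPoints := ⟨0, 0, by simp, by simp⟩
  have hdyadic : Set.EqOn x (fun _ => x 0) dyadicPoints := fun t ht =>
    Set.not_nontrivial_iff.1 hconst (Set.mem_image_of_mem x ht) (Set.mem_image_of_mem x hzero)
  have heq := hdyadic.of_subset_closure hx continuousOn_const dyadicPoints_subset_Icc
    Icc_subset_closure_dyadicPoints
  obtain ⟨s, hs, t, ht, hst⟩ := hnc
  exact hst ((heq hs).trans (heq ht).symm)

theorem apply_div_two_pow_eq_of_dyadicSlope_eq_zero {x : ℝ → ℝ} {n : ℕ}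
    (h : ∀ k < 2 ^ n, dyadicSlope x n k = 0) {k : ℕ} (hk : k ≤ 2 ^ n) :
    x ((k : ℝ) / 2 ^ n) = x 0 := by
  induction k with
  | zero => simp
  | succ k ih =>
    have hslope := (mul_eq_zero_iff_left (by positivity : (2 : ℝ) ^ n ≠ 0)).1 (h k hk)
    rw [Nat.cast_succ, sub_eq_zero.1 hslope, ih (Nat.le_of_succ_le hk)]

theorem eventually_slopeRms_pos {x : ℝ → ℝ} (hx : (x '' dyadicPoints).Nontrivial) :
    ∀ᶠ n in atTop, 0 < slopeRms x n := by
  by_contra hpos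
  have hzero : ∀ n, slopeRms x n = 0 := fun n => by
    by_contra hn
    have hn0 : 0 < slopeRms x n := (slopeRms_nonneg x n).lt_of_ne' hn
    exact hpos ((eventually_ge_atTop n).mono fun m hm => hn0.trans_le (monotone_slopeRms x hm))
  refine Set.not_nontrivial_iff.2 ?_ hx
  have hconst : ∀ t ∈ dyadicPoints, x t = x 0 := by
    rintro _ ⟨n, k, hk, rfl⟩
    refine apply_div_two_pow_eq_of_dyadicSlope_eq_zero (fun j hj => ?_) hk
    have hsq := slopeRms_sq x n
    rw [hzero, zero_pow two_ne_zero, eq_comm,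
      expect_eq_zero_iff_of_nonneg fun _ _ => sq_nonneg _] at hsq
    exact pow_eq_zero_iff two_ne_zero |>.1 (hsq j (mem_range.2 hj))
  rintro _ ⟨s, hs, rfl⟩ _ ⟨t, ht, rfl⟩
  rw [hconst s hs, hconst t ht]

theorem abs_dyadicSlope_le {x : ℝ → ℝ} {B : ℝ} (hB : ∀ t ∈ dyadicPoints, |x t| ≤ B) {n k : ℕ}
    (hk : k < 2 ^ n) : |dyadicSlope x n k| ≤ 2 * B * 2 ^ n := by
  have hright := hB _ ⟨n, k + 1, hk, rfl⟩
  have hleft := hB _ ⟨n, k, hk.le, rfl⟩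
  rw [dyadicSlope, abs_mul, abs_of_pos (by positivity : (0 : ℝ) < 2 ^ n), mul_comm]
  rw [Nat.cast_succ] at hright
  gcongr
  linarith [abs_sub (x (((k : ℝ) + 1) / 2 ^ n)) (x ((k : ℝ) / 2 ^ n))]

theorem isBoundedUnder_le_xiSeq {x : ℝ → ℝ} {B : ℝ} (hB : ∀ t ∈ dyadicPoints, |x t| ≤ B) :
    IsBoundedUnder (· ≤ ·) atTop (xiSeq x) := by
  refine isBoundedUnder_of ⟨_, fun n => xiSeq_le_of_sSeq_le (le_max_left 1 (2 * B)) ?_⟩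
  refine (sSeq_le_slopeRms x n).trans (Real.sqrt_le_iff.2 ⟨by positivity, ?_⟩)
  refine expect_le (nonempty_range_iff.2 (by positivity)) fun k hk => ?_
  rw [← sq_abs]
  gcongr
  refine (abs_dyadicSlope_le hB (mem_range.1 hk)).trans ?_
  gcongr
  exact le_max_right 1 (2 * B)

theorem isBoundedUnder_le_xiSeq_of_continuousOn {x : ℝ → ℝ}
    (hx : ContinuousOn x (Set.Icc 0 1)) : IsBoundedUnder (· ≤ ·) atTop (xiSeq x) := by
  obtain ⟨B, hB⟩ := isCompact_Icc.exists_bound_of_continuousOn hx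
  exact isBoundedUnder_le_xiSeq fun t ht => hB t (dyadicPoints_subset_Icc ht)

theorem ReverseJensen.subexpLE_RJquantity {x : ℝ → ℝ} (hRJ : ReverseJensen x) {p : ℝ}
    (hp : 1 ≤ p) : SubexpLE (RJquantity x p) (fun n => sSeq x n ^ p) := by
  obtain ⟨N, ϱ, hϱ, hupper⟩ := hRJ p hp
  intro δ hδ
  filter_upwards [hϱ.subexpLE_one δ hδ, eventually_ge_atTop N] with n hn hNn
  rw [mul_one] at hn
  exact (hupper n hNn).2.trans
    (mul_le_mul_of_nonneg_right hn (Real.rpow_nonneg (sSeq_nonneg x n) p))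

theorem ReverseJensen.frequently_subexpLE_RJquantity {x : ℝ → ℝ} (hRJ : ReverseJensen x) :
    ∃ᶠ q : ℝ in atTop, SubexpLE (RJquantity x q) (fun n => sSeq x n ^ q) :=
  ((eventually_ge_atTop 1).mono fun _ hq => hRJ.subexpLE_RJquantity hq).frequently

theorem lt_one_sub_inv_iff {ξ p : ℝ} (hp : 0 < p) : ξ < 1 - p⁻¹ ↔ 1 < p * (1 - ξ) := by
  rw [lt_sub_comm, inv_lt_iff_one_lt_mul₀' hp]

theorem one_sub_inv_lt_iff {ξ p : ℝ} (hp : 0 < p) : 1 - p⁻¹ < ξ ↔ p * (1 - ξ) < 1 := by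
  rw [sub_lt_comm, ← one_div, lt_div_iff₀' hp]

theorem one_div_lt_iff_pos_and_one_lt_mul {a p : ℝ} (ha : 0 < a) :
    1 / a < p ↔ 0 < p ∧ 1 < p * a :=
  ⟨fun h => ⟨(one_div_pos.2 ha).trans h, (div_lt_iff₀ ha).1 h⟩, fun h => (div_lt_iff₀ ha).2 h.2⟩

theorem stmt3_general (x : ℝ → ℝ) (hnc : (x '' dyadicPoints).Nontrivial)
    (hRJ : ∃ᶠ q : ℝ in atTop, SubexpLE (RJquantity x q) (fun n => sSeq x n ^ q))
    (hξ : IsBoundedUnder (· ≤ ·) atTop (xiSeq x)) {ξp ξm : ℝ}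
    (hp : limsup (xiSeq x) atTop = ξp) (hm : liminf (xiSeq x) atTop = ξm) :
    (∀ p : ℝ, 0 < p → 1 < p * (1 - ξp) →
        limsup (fun n => ((dyadicVar x p n : ℝ) : EReal)) atTop = 0) ∧
    (∀ p : ℝ, 0 < p → p * (1 - ξp) < 1 →
        limsup (fun n => ((dyadicVar x p n : ℝ) : EReal)) atTop = ⊤) ∧
    (∀ p : ℝ, 0 < p → 1 < p * (1 - ξm) →
        liminf (fun n => ((dyadicVar x p n : ℝ) : EReal)) atTop = 0) ∧
    (∀ p : ℝ, 0 < p → p * (1 - ξm) < 1 →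
        liminf (fun n => ((dyadicVar x p n : ℝ) : EReal)) atTop = ⊤) := by
  subst hp hm
  have hpos := eventually_slopeRms_pos hnc
  have hup {p : ℝ} (hp : 0 < p) := subexpLE_dyadicVar_two_rpow hRJ hpos hp
  have hlow {p : ℝ} (hp : 0 < p) := subexpLE_two_rpow_dyadicVar hRJ hpos hp
  have hξ' := isBoundedUnder_ge_xiSeq x
  refine ⟨fun p hp h => ?_, fun p hp h => ?_, fun p hp h => ?_, fun p hp h => ?_⟩
  · exact limsup_eq_zero_of_limsup_exponent_lt hp (dyadicVar_nonneg x p) (hup hp) hξ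
      ((lt_one_sub_inv_iff hp).2 h)
  · exact limsup_eq_top_of_lt_limsup_exponent hp (hlow hp) hξ'.isCoboundedUnder_le
      ((one_sub_inv_lt_iff hp).2 h)
  · exact liminf_eq_zero_of_liminf_exponent_lt hp (dyadicVar_nonneg x p) (hup hp)
      hξ.isCoboundedUnder_ge ((lt_one_sub_inv_iff hp).2 h)
  · exact liminf_eq_top_of_lt_liminf_exponent hp (hlow hp) hξ' ((one_sub_inv_lt_iff hp).2 h)

theorem stmt3 (x : ℝ → ℝ) (hx : ContinuousOn x (Set.Icc 0 1)) (hnc : Nonconstant x)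
    (hRJ : ReverseJensen x) (ξp ξm : ℝ)
    (hp : limsup (xiSeq x) atTop = ξp) (hm : liminf (xiSeq x) atTop = ξm)
    (hp1 : ξp < 1) (hm1 : ξm < 1) :
    (∀ p : ℝ, 1 / (1 - ξp) < p →
        limsup (fun n => ((dyadicVar x p n : ℝ) : EReal)) atTop = 0) ∧
    (∀ p : ℝ, 0 < p → p < 1 / (1 - ξp) →
        limsup (fun n => ((dyadicVar x p n : ℝ) : EReal)) atTop = ⊤) ∧
    (∀ p : ℝ, 1 / (1 - ξm) < p →
        liminf (fun n => ((dyadicVar x p n : ℝ) : EReal)) atTop = 0) ∧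
    (∀ p : ℝ, 0 < p → p < 1 / (1 - ξm) →
        liminf (fun n => ((dyadicVar x p n : ℝ) : EReal)) atTop = ⊤) := by
  have hp' := sub_pos.2 hp1
  have hm' := sub_pos.2 hm1
  simpa only [one_div_lt_iff_pos_and_one_lt_mul hp', one_div_lt_iff_pos_and_one_lt_mul hm',
    lt_div_iff₀ hp', lt_div_iff₀ hm', and_imp] using
    stmt3_general x (hnc.nontrivial_image_dyadicPoints hx) hRJ.frequently_subexpLE_RJquantity
      (isBoundedUnder_le_xiSeq_of_continuousOn hx) hp hm
end
end

section
/- Let x : [0,1] → ℝ be a continuous function with Faber–Schauder coefficients θ_{m,k} and s_n := (Σ_{m=0}^{n−1} Σ_{k=0}^{2^m−1} θ_{m,k}²)^{1/2}. If sup_{n∈ℕ} s_n < ∞, then x has bounded variation on [0,1]. -/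
open Filter Finset

noncomputable section

/-!
Let `Q_N = N ∑_{k<N} |x((k+1)/N) - x(k/N)|²` be the energy of `x` along the grid of mesh `1/N`.
Halving the mesh splits each increment as a sum `a + b`, and for `N = 2^m` the difference `a - b` is
`2^{-m/2} θ_{m,k}`. The parallelogram identity `2(a² + b²) = (a + b)² + (a - b)²` therefore gives
`Q_{2^{m+1}} = Q_{2^m} + ∑_k θ_{m,k}²`, so `Q_{2^n} = |x(1) - x(0)|² + s_n²`.

By Cauchy–Schwarz the variation of `x` along a grid is at most `√Q_N`. Rounding the argument of `x`
down to the grid gives step functions of no larger variation, which converge pointwise to `x` by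
left-continuity, and total variation is lower semicontinuous under pointwise convergence.
-/

open scoped ENNReal Topology

theorem sum_range_two_mul {M : Type*} [AddCommMonoid M] (f : ℕ → M) (n : ℕ) :
    ∑ k ∈ range (2 * n), f k = ∑ k ∈ range n, (f (2 * k) + f (2 * k + 1)) := by
  induction n with
  | zero => simp
  | succ n ih => rw [mul_add_one, sum_range_succ, sum_range_succ, sum_range_succ, ih, add_assoc]

section Variation

theorem tendsto_comp_natFloor_mul_div {ι X : Type*} [TopologicalSpace X] {l : Filter ι} {N : ι → ℕ}
    {f : ℝ → X} {t : ℝ} (hN : Tendsto N l atTop) (ht : 0 ≤ t)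
    (hf : ContinuousWithinAt f (Set.Icc 0 t) t) :
    Tendsto (fun i ↦ f (⌊t * N i⌋₊ / N i)) l (𝓝 (f t)) := by
  refine hf.tendsto.comp (tendsto_nhdsWithin_iff.2 ⟨?_, .of_forall fun i ↦ ⟨by positivity, ?_⟩⟩)
  · exact (tendsto_nat_floor_mul_div_atTop ht).comp (tendsto_natCast_atTop_atTop.comp hN)
  · exact div_le_of_le_mul₀ (by positivity) ht (Nat.floor_le (by positivity))

variable {E : Type*} [PseudoEMetricSpace E]

theorem eVariationOn_comp_natFloor_mul_div_le (f : ℝ → E) (N : ℕ) :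
    eVariationOn (fun t : ℝ ↦ f (⌊t * N⌋₊ / N)) (Set.Icc 0 1) ≤
      ∑ k ∈ range N, edist (f (k / N)) (f ((k + 1) / N)) := by
  have grid_mono : Monotone fun k : ℕ ↦ (k / N : ℝ) := fun _ _ h ↦ by dsimp only; gcongr
  have floor_mono : Monotone fun t : ℝ ↦ ⌊t * N⌋₊ := fun _ _ h ↦ by dsimp only; gcongr
  have floor_le : ∀ t ∈ Set.Icc (0 : ℝ) 1, ⌊t * N⌋₊ ≤ N := fun t ht ↦
    Nat.floor_le_of_le (mul_le_of_le_one_left N.cast_nonneg ht.2)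
  calc eVariationOn (fun t : ℝ ↦ f (⌊t * N⌋₊ / N)) (Set.Icc 0 1)
    _ ≤ eVariationOn f ((fun k : ℕ ↦ (k / N : ℝ)) '' Set.Iic N) :=
      eVariationOn.comp_le_of_monotoneOn f _ ((grid_mono.comp floor_mono).monotoneOn _)
        fun t ht ↦ Set.mem_image_of_mem _ (floor_le t ht)
    _ = ∑ k ∈ range N, edist (f (k / N)) (f ((k + 1) / N)) := by
      simpa only [Nat.cast_add_one] using eVariationOn.image_range_of_monotone f grid_mono N

theorem eVariationOn_Icc_le_of_frequently_sum_edist_le {ι : Type*} {l : Filter ι} {N : ι → ℕ}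
    {f : ℝ → E} {C : ℝ≥0∞} (hN : Tendsto N l atTop)
    (hf : ∀ t ∈ Set.Icc 0 1, ContinuousWithinAt f (Set.Icc 0 t) t)
    (hC : ∃ᶠ i in l, ∑ k ∈ range (N i), edist (f (k / N i)) (f ((k + 1) / N i)) ≤ C) :
    eVariationOn f (Set.Icc 0 1) ≤ C := by
  by_contra! hlt
  have lt_step : ∀ᶠ i in l, C < eVariationOn (fun t : ℝ ↦ f (⌊t * N i⌋₊ / N i)) (Set.Icc 0 1) :=
    eVariationOn.lowerSemicontinuous_aux
      (fun t ht ↦ tendsto_comp_natFloor_mul_div hN ht.1 (hf t ht)) hlt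
  obtain ⟨i, sum_le, lt_var⟩ := (hC.and_eventually lt_step).exists
  exact ((eVariationOn_comp_natFloor_mul_div_le f (N i)).trans sum_le).not_gt lt_var

end Variation

section Energy

variable {E : Type*} [SeminormedAddCommGroup E]

/-- The energy `N ∑_{k<N} ‖f((k+1)/N) - f(k/N)‖²` of `f` along the grid of mesh `1/N` in `[0,1]`,
that is, the Dirichlet energy `∫₀¹ ‖g'‖²` of the piecewise linear interpolation `g` of `f` on that
grid. It controls the variation of `f` along the grid. -/
def gridEnergy (f : ℝ → E) (N : ℕ) : ℝ :=
  N * ∑ k ∈ range N, ‖f ((k + 1) / N) - f (k / N)‖ ^ 2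

theorem sum_edist_le_sqrt_gridEnergy (f : ℝ → E) (N : ℕ) :
    ∑ k ∈ range N, edist (f (k / N)) (f ((k + 1) / N)) ≤ ENNReal.ofReal √(gridEnergy f N) := by
  have cauchy_schwarz :
      (∑ k ∈ range N, ‖f ((k + 1) / N) - f (k / N)‖) ^ 2 ≤ gridEnergy f N := by
    simpa only [gridEnergy, card_range] using
      sq_sum_le_card_mul_sum_sq (s := range N) (f := fun k ↦ ‖f ((k + 1) / N) - f (k / N)‖)
  simp_rw [edist_dist, dist_eq_norm_sub']
  rw [← ENNReal.ofReal_sum_of_nonneg fun _ _ ↦ norm_nonneg _]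
  exact ENNReal.ofReal_le_ofReal (Real.le_sqrt_of_sq_le cauchy_schwarz)

theorem gridEnergy_two_mul [InnerProductSpace ℝ E] (f : ℝ → E) (N : ℕ) :
    gridEnergy f (2 * N) = gridEnergy f N + N * ∑ k ∈ range N,
      ‖(f ((2 * k + 1) / (2 * N)) - f (k / N)) -
        (f ((k + 1) / N) - f ((2 * k + 1) / (2 * N)))‖ ^ 2 := by
  let mid (k : ℕ) : ℝ := (2 * k + 1) / (2 * N)
  have left_endpoint (k : ℕ) : (2 * k : ℝ) / (2 * N) = k / N := mul_div_mul_left _ _ two_ne_zero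
  have right_endpoint (k : ℕ) : (2 * k + 1 + 1 : ℝ) / (2 * N) = (k + 1) / N := by
    rw [← mul_div_mul_left ((k : ℝ) + 1) N two_ne_zero]
    ring
  calc gridEnergy f (2 * N)
    _ = 2 * N * ∑ k ∈ range N,
          (‖f (mid k) - f (k / N)‖ ^ 2 + ‖f ((k + 1) / N) - f (mid k)‖ ^ 2) := by
      simp only [gridEnergy, sum_range_two_mul, Nat.cast_add, Nat.cast_mul, Nat.cast_ofNat,
        Nat.cast_one, left_endpoint, right_endpoint, mid]
    _ = N * ∑ k ∈ range N,
          2 * (‖f (mid k) - f (k / N)‖ ^ 2 + ‖f ((k + 1) / N) - f (mid k)‖ ^ 2) := by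
      rw [← mul_sum, mul_left_comm, mul_assoc]
    _ = N * ∑ k ∈ range N, (‖f ((k + 1) / N) - f (k / N)‖ ^ 2 +
          ‖(f (mid k) - f (k / N)) - (f ((k + 1) / N) - f (mid k))‖ ^ 2) := by
      simp only [← parallelogram_law_with_norm ℝ, sub_add_sub_cancel']
    _ = gridEnergy f N + N * ∑ k ∈ range N,
          ‖(f (mid k) - f (k / N)) - (f ((k + 1) / N) - f (mid k))‖ ^ 2 := by
      rw [sum_add_distrib, mul_add, gridEnergy]

end Energy

theorem fsCoeff_sq (x : ℝ → ℝ) (m k : ℕ) :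
    fsCoeff x m k ^ 2 = 2 ^ m *
      (2 * x ((2 * k + 1) / 2 ^ (m + 1)) - x (k / 2 ^ m) - x ((k + 1) / 2 ^ m)) ^ 2 := by
  have rpow_half_sq : ((2 : ℝ) ^ ((m : ℝ) / 2)) ^ 2 = 2 ^ m := by
    rw [← Real.rpow_mul_natCast zero_le_two, Nat.cast_ofNat, div_mul_cancel₀ _ two_ne_zero,
      Real.rpow_natCast]
  rw [fsCoeff, mul_pow, rpow_half_sq]

theorem gridEnergy_two_pow_succ (x : ℝ → ℝ) (n : ℕ) :
    gridEnergy x (2 ^ (n + 1)) =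
      gridEnergy x (2 ^ n) + ∑ k ∈ range (2 ^ n), fsCoeff x n k ^ 2 := by
  rw [pow_succ', gridEnergy_two_mul, mul_sum]
  congr! 2 with k
  rw [fsCoeff_sq, Real.norm_eq_abs, sq_abs, pow_succ' 2 n, Nat.cast_pow, Nat.cast_ofNat]
  ring

theorem gridEnergy_two_pow (x : ℝ → ℝ) (n : ℕ) :
    gridEnergy x (2 ^ n) = (x 1 - x 0) ^ 2 + sSeq x n ^ 2 := by
  rw [sSeq, Real.sq_sqrt (by positivity)]
  induction n with
  | zero => simp [gridEnergy]
  | succ n ih => rw [gridEnergy_two_pow_succ, ih, sum_range_succ, add_assoc]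

theorem stmt9_general (x : ℝ → ℝ) {M : ℝ}
    (hx : ∀ t ∈ Set.Icc 0 1, ContinuousWithinAt x (Set.Icc 0 t) t) (hM : ∀ n, sSeq x n ≤ M) :
    eVariationOn x (Set.Icc 0 1) ≤ ENNReal.ofReal √((x 1 - x 0) ^ 2 + M ^ 2) := by
  refine eVariationOn_Icc_le_of_frequently_sum_edist_le
    (tendsto_pow_atTop_atTop_of_one_lt one_lt_two) hx (Frequently.of_forall fun n ↦ ?_)
  have sSeq_nonneg : 0 ≤ sSeq x n := Real.sqrt_nonneg _
  calc ∑ k ∈ range (2 ^ n), edist (x (k / (2 ^ n : ℕ))) (x ((k + 1) / (2 ^ n : ℕ)))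
    _ ≤ ENNReal.ofReal √(gridEnergy x (2 ^ n)) := sum_edist_le_sqrt_gridEnergy x (2 ^ n)
    _ = ENNReal.ofReal √((x 1 - x 0) ^ 2 + sSeq x n ^ 2) := by rw [gridEnergy_two_pow]
    _ ≤ ENNReal.ofReal √((x 1 - x 0) ^ 2 + M ^ 2) := by gcongr; exact hM n

theorem stmt9 (x : ℝ → ℝ) (hx : ContinuousOn x (Set.Icc 0 1))
    (hs : BddAbove (Set.range (sSeq x))) :
    BoundedVariationOn x (Set.Icc 0 1) := by
  obtain ⟨M, hM⟩ := hs
  exact ne_top_of_le_ne_top ENNReal.ofReal_ne_top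
    (stmt9_general x (fun t ht ↦ (hx t ht).mono (Set.Icc_subset_Icc_right ht.2))
      fun n ↦ hM ⟨n, rfl⟩)
end
end
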